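/- Let V be a finite-dimensional unital associative algebra over a field k of characteristic zero such that the trace form g(x,y) := tr(L_{x*y}) is nondegenerate, and define γ(x,y) := tr of the endomorphism z ↦ x*z*y. Let P : V → V be a linear map satisfying g(x, P(y)) = γ(x,y) for all x, y ∈ V. Then P is a projector, P ∘ P = P, with range equal to the center Z(V) and kernel equal to the linear span of commutators [V,V]. (In field-theory terms: the partition function of the simplest triangulated cylinder is the projection onto the center along the commutator subspace.) -/

import Mathlib

/-!
Everything follows from cyclicity of the trace, `L_x R_y = R_y L_x`, and nondegeneracy of
`g(x, y) = tr L_{x*y}`. Pairing with an arbitrary `x` shows that `P y` is central, that `P z = z`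
for central `z`, and that `P` kills commutators. Hence `P` is a projector onto the center, and
`[V,V] ≤ ker P`. Equality follows by dimension count: `g(x*a - a*x, b) = g(x, a*b - b*a)`
identifies the `g`-orthogonal of `[V,V]` with the center, so
`dim [V,V] = dim V - dim Z(V) = dim ker P`.
-/

/-- The trace form `g(x, y) = tr L_{x*y}` as a bilinear form. -/
noncomputable def leftTraceForm (k V : Type*) [Field k] [Ring V] [Algebra k V] :
    LinearMap.BilinForm k V :=
  (LinearMap.mul k V).compr₂ (LinearMap.trace k V ∘ₗ LinearMap.mul k V)

theorem leftTraceForm_apply (k : Type*) {V : Type*} [Field k] [Ring V] [Algebra k V] (x y : V) :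
    leftTraceForm k V x y = LinearMap.trace k V (LinearMap.mulLeft k (x * y)) := rfl

theorem trace_mulLeft_mul_comm (k : Type*) {V : Type*} [Field k] [Ring V] [Algebra k V]
    [FiniteDimensional k V] (x y : V) :
    LinearMap.trace k V (LinearMap.mulLeft k (x * y)) =
      LinearMap.trace k V (LinearMap.mulLeft k (y * x)) := by
  rw [LinearMap.mulLeft_mul, LinearMap.mulLeft_mul, LinearMap.trace_comp_comm']

/-- If `P : V → V` is the linear map representing the pairing `γ(x,y) = tr(z ↦ x*z*y)`
with respect to the nondegenerate trace form `g(x,y) = tr(L_{x*y})`, i.e.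
`g(x, P y) = γ(x, y)` for all `x, y`, then `P` is a projector with range the center
`Z(V)` and kernel the commutator subspace `[V,V]`. -/
theorem stmt_6 (k V : Type*) [Field k] [CharZero k] [Ring V] [Algebra k V]
    [FiniteDimensional k V]
    (hnondeg : ∀ x : V,
      (∀ y : V, LinearMap.trace k V (LinearMap.mulLeft k (x * y)) = 0) → x = 0)
    (P : V →ₗ[k] V)
    (hP : ∀ x y : V,
      LinearMap.trace k V (LinearMap.mulLeft k (x * P y)) =
        LinearMap.trace k V (LinearMap.mulLeft k x ∘ₗ LinearMap.mulRight k y)) :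
    P ∘ₗ P = P ∧
    LinearMap.range P = (Subalgebra.center k V).toSubmodule ∧
    LinearMap.ker P = Submodule.span k {c : V | ∃ a b : V, c = a * b - b * a} := by
  have hsymm : (leftTraceForm k V).IsSymm := ⟨fun x y => trace_mulLeft_mul_comm k x y⟩
  have hext : ∀ a b : V, (∀ x, leftTraceForm k V x a = leftTraceForm k V x b) → a = b := by
    intro a b h
    refine sub_eq_zero.1 (hnondeg _ fun y => ?_)
    rw [trace_mulLeft_mul_comm, ← leftTraceForm_apply, map_sub, h, sub_self]
  have hnd : (leftTraceForm k V).Nondegenerate :=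
    hsymm.isRefl.nondegenerate_iff_separatingLeft.2 fun x h => hnondeg x h
  have hcomm : ∀ x y : V, LinearMap.mulLeft k x ∘ₗ LinearMap.mulRight k y =
      LinearMap.mulRight k y ∘ₗ LinearMap.mulLeft k x := by
    intro x y
    ext z
    simp [mul_assoc]
  have hcentral : ∀ y, P y ∈ Subalgebra.center k V := by
    intro y
    rw [Subalgebra.mem_center_iff]
    intro z
    refine hext _ _ fun x => ?_
    rw [leftTraceForm_apply, leftTraceForm_apply, ← mul_assoc, hP, ← mul_assoc,
      trace_mulLeft_mul_comm k (x * P y) z, ← mul_assoc, hP, LinearMap.mulLeft_mul,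
      LinearMap.mulLeft_mul, LinearMap.comp_assoc, LinearMap.comp_assoc, hcomm z y,
      ← LinearMap.comp_assoc, LinearMap.trace_comp_comm']
  have hfix : ∀ z ∈ Subalgebra.center k V, P z = z := by
    intro z hz
    rw [Subalgebra.mem_center_iff] at hz
    refine hext _ _ fun x => ?_
    rw [leftTraceForm_apply, leftTraceForm_apply, hP, LinearMap.mulLeft_mul]
    congr 2
    ext w
    exact hz w
  have hrange : LinearMap.range P = (Subalgebra.center k V).toSubmodule := by
    ext z
    constructor
    · rintro ⟨y, rfl⟩
      exact hcentral y
    · intro hz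
      exact ⟨z, hfix z hz⟩
  refine ⟨LinearMap.ext fun y => hfix _ (hcentral y), hrange, ?_⟩
  set W := Submodule.span k {c : V | ∃ a b : V, c = a * b - b * a} with hW
  have hle : W ≤ LinearMap.ker P := by
    rw [hW, Submodule.span_le]
    rintro _ ⟨a, b, rfl⟩
    change P _ = 0
    rw [map_sub, sub_eq_zero]
    refine hext _ _ fun x => ?_
    rw [leftTraceForm_apply, leftTraceForm_apply, hP, hP, LinearMap.mulRight_mul,
      LinearMap.mulRight_mul, ← LinearMap.comp_assoc, LinearMap.trace_comp_comm',
      ← LinearMap.comp_assoc, ← hcomm, LinearMap.comp_assoc]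
  have horth : (leftTraceForm k V).orthogonal W = (Subalgebra.center k V).toSubmodule := by
    have hinv : ∀ x a b : V, leftTraceForm k V (a * b - b * a) x =
        leftTraceForm k V b (x * a) - leftTraceForm k V b (a * x) := by
      intro x a b
      rw [map_sub, LinearMap.sub_apply]
      simp only [leftTraceForm_apply]
      rw [mul_assoc a b x, trace_mulLeft_mul_comm k a (b * x), mul_assoc b x a, mul_assoc b a x]
    ext x
    rw [LinearMap.BilinForm.mem_orthogonal_iff, Subalgebra.mem_toSubmodule,
      Subalgebra.mem_center_iff]
    constructor
    · intro h a
      refine hext _ _ fun b => ?_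
      have hab := h (a * b - b * a) (Submodule.subset_span ⟨a, b, rfl⟩)
      rw [hinv, sub_eq_zero] at hab
      exact hab.symm
    · intro h w hw
      change leftTraceForm k V w x = 0
      induction hw using Submodule.span_induction with
      | mem w hw =>
        obtain ⟨a, b, rfl⟩ := hw
        rw [hinv, h a, sub_self]
      | zero => simp
      | add u v _ _ hu hv => rw [map_add, LinearMap.add_apply, hu, hv, add_zero]
      | smul c u _ hu => rw [map_smul, LinearMap.smul_apply, hu, smul_zero]
  symm
  apply Submodule.eq_of_le_of_finrank_eq hle
  have h1 := LinearMap.BilinForm.finrank_orthogonal hnd W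
  have h2 := P.finrank_range_add_finrank_ker
  have h3 := Submodule.finrank_le W
  rw [hrange] at h2
  rw [horth] at h1
  omega
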